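/- Let l ≡ −1 (mod 8) be prime, F = ℚ(√(−2l)), E = F(i), 𝔩 the prime of F above l, and 𝔏 the prime of E above 𝔩, so E_𝔏 = ℚ_l(i, √l) and F_𝔩 = ℚ_l(√(−2l)). For ξ ∈ E_𝔏^×: if N_{E_𝔏/F_𝔩}(ξ) = 1 then the local Hilbert symbols satisfy (ξ, √l)_𝔏 = (ξ, −√l)_𝔏 = 1; if N_{E_𝔏/F_𝔩}(ξ) = −1 then (ξ, √l)_𝔏 = (ξ, −√l)_𝔏 = −1. -/

import Mathlib

/-- The quadratic Hilbert symbol `(a, b)_K` of a field `K` equals `1` iff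
`z² = a·x² + b·y²` has a nontrivial solution. -/
def HilbertSymbolOne (K : Type*) [Field K] (a b : K) : Prop :=
  ∃ x y z : K, ¬(x = 0 ∧ y = 0 ∧ z = 0) ∧ z ^ 2 = a * x ^ 2 + b * y ^ 2

theorem PadicInt.isUnit_iff_toZMod_ne_zero {p : ℕ} [Fact p.Prime] (x : ℤ_[p]) :
    IsUnit x ↔ PadicInt.toZMod x ≠ 0 := by
  rw [ne_eq, ← RingHom.mem_ker, PadicInt.ker_toZMod, IsLocalRing.mem_maximalIdeal, mem_nonunits_iff,
    not_not]

theorem PadicInt.isSquare_of_isSquare_toZMod {p : ℕ} [Fact p.Prime] (hp : p ≠ 2) {u : ℤ_[p]}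
    (hu : IsUnit u) (h : IsSquare (PadicInt.toZMod u)) : IsSquare u := by
  obtain ⟨c, hc⟩ := h
  obtain ⟨a, rfl⟩ := ZMod.ringHom_surjective (PadicInt.toZMod (p := p)) c
  have ha : ‖(2 * a : ℤ_[p])‖ = 1 := by
    rw [← PadicInt.isUnit_iff, PadicInt.isUnit_iff_toZMod_ne_zero, map_mul]
    refine mul_ne_zero ?_ ?_
    · rw [map_ofNat]
      exact Ring.two_ne_zero (by rwa [ZMod.ringChar_zmod_n])
    · intro h0
      rw [PadicInt.isUnit_iff_toZMod_ne_zero, hc, h0] at hu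
      simp at hu
  have hlt : ‖a ^ 2 - u‖ < 1 := by
    rw [← PadicInt.mem_nonunits, mem_nonunits_iff, PadicInt.isUnit_iff_toZMod_ne_zero, not_not,
      map_sub, map_pow, hc]
    ring
  obtain ⟨z, hz, -⟩ := hensels_lemma (p := p) (R := ℤ_[p])
    (F := Polynomial.X ^ 2 - Polynomial.C u) (a := a) (by
      simpa [one_add_one_eq_two, ← norm_mul, ha] using hlt)
  exact ⟨z, by simpa [sub_eq_zero, sq, eq_comm] using hz⟩

theorem Padic.norm_eq_one_of_valuation_eq_zero {p : ℕ} [Fact p.Prime] {q : ℚ_[p]} (hq : q ≠ 0)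
    (h : q.valuation = 0) : ‖q‖ = 1 := by
  rw [Padic.norm_eq_zpow_neg_valuation hq, h, neg_zero, zpow_zero]

theorem Padic.valuation_eq_zero_of_norm_eq_one {p : ℕ} [hp : Fact p.Prime] {q : ℚ_[p]}
    (h : ‖q‖ = 1) : q.valuation = 0 := by
  have hq : q ≠ 0 := by rintro rfl; simp at h
  rw [Padic.norm_eq_zpow_neg_valuation hq, zpow_eq_one_iff_right₀ (by positivity)
    (by exact_mod_cast hp.out.one_lt.ne')] at h
  omega

section

variable {p : ℕ} [hp : Fact p.Prime]

theorem ZMod.isSquare_or_isSquare_neg (h : p % 4 = 3) (c : ZMod p) :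
    IsSquare c ∨ IsSquare (-c) := by
  by_cases hc : c = 0
  · exact Or.inl (hc ▸ IsSquare.zero)
  have hodd : p / 2 % 2 = 1 := by omega
  rw [ZMod.euler_criterion p hc, ZMod.euler_criterion p (neg_ne_zero.mpr hc),
    (Nat.odd_iff.mpr hodd).neg_pow]
  rcases ZMod.pow_div_two_eq_neg_one_or_one p hc with h | h <;> simp [h]

theorem Padic.isSquare_or_isSquare_neg_of_even_valuation (h : p % 4 = 3) {q : ℚ_[p]}
    (hv : Even q.valuation) : IsSquare q ∨ IsSquare (-q) := by
  by_cases hq : q = 0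
  · exact Or.inl (hq ▸ IsSquare.zero)
  obtain ⟨k, hk⟩ := hv
  have hp0 : (p : ℚ_[p]) ≠ 0 := by exact_mod_cast hp.out.ne_zero
  set w : ℚ_[p] := q * ((p : ℚ_[p]) ^ (-k)) ^ 2 with hw
  have hw0 : w ≠ 0 := by positivity
  have hqw : q = w * ((p : ℚ_[p]) ^ k) ^ 2 := by
    rw [hw, zpow_neg]; field_simp
  have hwn : ‖w‖ = 1 := by
    apply Padic.norm_eq_one_of_valuation_eq_zero hw0
    rw [hw, Padic.valuation_mul hq (by positivity), Padic.valuation_pow, Padic.valuation_zpow,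
      Padic.valuation_p, hk]
    push_cast
    ring
  have key : ∀ x : ℤ_[p], IsUnit x → IsSquare (PadicInt.toZMod x) → IsSquare (x : ℚ_[p]) :=
    fun x hx hs => (PadicInt.isSquare_of_isSquare_toZMod (by omega) hx hs).map
      PadicInt.Coe.ringHom
  let x : ℤ_[p] := ⟨w, hwn.le⟩
  have hx : IsUnit x := PadicInt.isUnit_iff.mpr hwn
  have hs : IsSquare (((p : ℚ_[p]) ^ k) ^ 2) := ⟨_, sq _⟩
  rw [hqw, ← neg_mul]
  refine (ZMod.isSquare_or_isSquare_neg h (PadicInt.toZMod x)).imp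
    (fun hs' => (key x hx hs').mul hs) (fun hs' => ?_)
  rw [← map_neg] at hs'
  simpa using (key (-x) hx.neg hs').mul hs

theorem Padic.even_valuation_sq_add_sq (h : p % 4 = 3) (u v : ℚ_[p]) :
    (u ^ 2 + v ^ 2 = 0 → u = 0 ∧ v = 0) ∧ Even (u ^ 2 + v ^ 2).valuation := by
  wlog huv : ‖u‖ ≤ ‖v‖ generalizing u v
  · rw [add_comm, and_comm (a := u = 0)]
    exact this v u (le_of_not_ge huv)
  by_cases hv : v = 0
  · obtain rfl : u = 0 := by simpa [hv] using huv
    simp [hv]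
  have hc : ‖u / v‖ ≤ 1 := by
    rw [norm_div]
    exact div_le_one_of_le₀ huv (norm_nonneg _)
  let c : ℤ_[p] := ⟨u / v, hc⟩
  have hn : ‖(u / v) ^ 2 + 1‖ = 1 := by
    have : IsUnit (c ^ 2 + 1) := by
      rw [PadicInt.isUnit_iff_toZMod_ne_zero, map_add, map_pow, map_one]
      intro h0
      exact ZMod.exists_sq_eq_neg_one_iff.mp
        ⟨PadicInt.toZMod c, by rw [← sq]; exact (eq_neg_of_add_eq_zero_left h0).symm⟩ h
    exact PadicInt.isUnit_iff.mp this
  have he : u ^ 2 + v ^ 2 = v ^ 2 * ((u / v) ^ 2 + 1) := by field_simp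
  have h1 : (u / v) ^ 2 + 1 ≠ 0 := by
    intro h0
    simp [h0] at hn
  rw [he]
  refine ⟨fun h0 => absurd h0 (by positivity), ?_⟩
  rw [Padic.valuation_mul (by positivity) h1, Padic.valuation_eq_zero_of_norm_eq_one hn,
    Padic.valuation_pow]
  simp

theorem Padic.valuation_two_mul_self (h : p ≠ 2) : (2 * p : ℚ_[p]).valuation = 1 := by
  have h2 : ((2 : ℕ) : ℚ_[p]).valuation = 0 := by
    rw [Padic.valuation_natCast, padicValNat_primes h]
    rfl
  have hp0 : (p : ℚ_[p]) ≠ 0 := by exact_mod_cast hp.out.ne_zero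
  rw [Padic.valuation_mul two_ne_zero hp0, Padic.valuation_p]
  simpa using h2

theorem Padic.sq_add_sq_ne_two_mul_self_mul (h : p % 4 = 3) {ε : ℚ_[p]} (hε : ε ^ 2 = 1)
    {u v w x : ℚ_[p]} (he : u ^ 2 + v ^ 2 = ε * (2 * p) * (w ^ 2 + x ^ 2)) :
    w = 0 ∧ x = 0 := by
  by_contra hne
  have hs : w ^ 2 + x ^ 2 ≠ 0 := fun h0 => hne ((even_valuation_sq_add_sq h w x).1 h0)
  have h1 := (even_valuation_sq_add_sq h u v).2
  have h2 := (even_valuation_sq_add_sq h w x).2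
  have hp0 : (p : ℚ_[p]) ≠ 0 := by exact_mod_cast hp.out.ne_zero
  have h2p : (2 * p : ℚ_[p]) ≠ 0 := mul_ne_zero two_ne_zero hp0
  have hε0 : ε ≠ 0 := by rintro rfl; simp at hε
  have hεv : ε.valuation = 0 := by
    have := congrArg Padic.valuation hε
    rw [Padic.valuation_pow, Padic.valuation_one] at this
    simpa using this
  rw [he, Padic.valuation_mul (mul_ne_zero hε0 h2p) hs, Padic.valuation_mul hε0 h2p,
    valuation_two_mul_self (by omega), hεv, Int.even_add] at h1
  simp [h2] at h1

theorem Padic.isSquare_algebraMap (h : p % 4 = 3) {E : Type*} [Field E] [Algebra ℚ_[p] E]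
    (h1 : IsSquare (-1 : E)) (hpE : IsSquare (p : E)) (q : ℚ_[p]) :
    IsSquare (algebraMap ℚ_[p] E q) := by
  have key : ∀ q : ℚ_[p], Even q.valuation → IsSquare (algebraMap ℚ_[p] E q) := by
    intro q hq
    rcases isSquare_or_isSquare_neg_of_even_valuation h hq with hs | hs
    · exact hs.map _
    · simpa using h1.mul (hs.map (algebraMap ℚ_[p] E))
  by_cases hq : q = 0
  · simp [hq]
  rcases Int.even_or_odd q.valuation with hv | hv
  · exact key q hv
  · have hp0 : (p : ℚ_[p]) ≠ 0 := by exact_mod_cast hp.out.ne_zero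
    have := key (q / p) (by
      rw [div_eq_mul_inv, Padic.valuation_mul hq (by positivity), Padic.valuation_inv,
        Padic.valuation_p]
      exact hv.add_odd (by decide))
    have h2 := this.mul hpE
    rwa [← map_natCast (algebraMap ℚ_[p] E), ← map_mul, div_mul_cancel₀ _ hp0] at h2

theorem Padic.isSquare_two (h : p % 8 = 7) : IsSquare (2 : ℚ_[p]) := by
  have h2 : IsSquare (PadicInt.toZMod (2 : ℤ_[p])) := by
    rw [map_ofNat]
    exact (ZMod.exists_sq_eq_two_iff (by omega)).mpr (Or.inr h)
  have hu : IsUnit (2 : ℤ_[p]) := by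
    rw [PadicInt.isUnit_iff_toZMod_ne_zero, map_ofNat]
    exact Ring.two_ne_zero (by rw [ZMod.ringChar_zmod_n]; omega)
  simpa [map_ofNat] using (PadicInt.isSquare_of_isSquare_toZMod (by omega) hu h2).map
    (PadicInt.Coe.ringHom (p := p))

end

section RamifiedQuadratic

variable {p : ℕ} [hp : Fact p.Prime] {F : Type*} [Field F] [Algebra ℚ_[p] F] {r : F}

theorem exists_eq_add_mul_of_adjoin_eq_top {K A : Type*} [Field K] [Field A] [Algebra K A]
    {r : A} {d : K} (hr : r ^ 2 = algebraMap K A d) (hA : Algebra.adjoin K {r} = ⊤) (x : A) :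
    ∃ a b : K, x = algebraMap K A a + algebraMap K A b * r := by
  have hx : x ∈ Algebra.adjoin K {r} := hA ▸ Algebra.mem_top
  induction hx using Algebra.adjoin_induction with
  | mem x hx =>
    obtain rfl := hx
    exact ⟨0, 1, by simp⟩
  | algebraMap a => exact ⟨a, 0, by simp⟩
  | add x y _ _ hx hy =>
    obtain ⟨a, b, rfl⟩ := hx
    obtain ⟨c, e, rfl⟩ := hy
    exact ⟨a + c, b + e, by simp only [map_add]; ring⟩
  | mul x y _ _ hx hy =>
    obtain ⟨a, b, rfl⟩ := hx
    obtain ⟨c, e, rfl⟩ := hy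
    refine ⟨a * c + d * b * e, a * e + b * c, ?_⟩
    simp only [map_add, map_mul]
    linear_combination algebraMap K A b * algebraMap K A e * hr

theorem Padic.coeffs_eq_zero_of_add_mul_eq_zero (h : p % 4 = 3) (hr : r ^ 2 = algebraMap ℚ_[p] F (-(2 * p) : ℚ_[p]))
    {a b : ℚ_[p]} (hab : algebraMap ℚ_[p] F a + algebraMap ℚ_[p] F b * r = 0) : a = 0 ∧ b = 0 := by
  have hb : b = 0 := by
    have he : algebraMap ℚ_[p] F (a ^ 2) = algebraMap ℚ_[p] F (b ^ 2 * -(2 * p)) := by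
      rw [map_mul, ← hr]
      simp only [map_pow]
      linear_combination (algebraMap ℚ_[p] F a - algebraMap ℚ_[p] F b * r) * hab
    have he' := (algebraMap ℚ_[p] F).injective he
    exact (sq_add_sq_ne_two_mul_self_mul h (ε := -1) (u := a) (v := 0) (x := 0) (by norm_num)
      (by linear_combination he')).1
  simpa [hb] using hab

variable (h : p % 4 = 3) (hr : r ^ 2 = algebraMap ℚ_[p] F (-(2 * p) : ℚ_[p])) (hF : Algebra.adjoin ℚ_[p] {r} = ⊤)

include h hr hF

theorem Padic.sq_add_sq_ne_mul_uniformizer {ε : ℚ_[p]} (hε : ε ^ 2 = 1) (A B : F) :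
    A ^ 2 + B ^ 2 ≠ algebraMap ℚ_[p] F ε * r := by
  intro he
  obtain ⟨a, b, rfl⟩ := exists_eq_add_mul_of_adjoin_eq_top hr hF A
  obtain ⟨c, d, rfl⟩ := exists_eq_add_mul_of_adjoin_eq_top hr hF B
  have hz : algebraMap ℚ_[p] F (a ^ 2 + c ^ 2 + (b ^ 2 + d ^ 2) * -(2 * p)) +
      algebraMap ℚ_[p] F (2 * (a * b + c * d) - ε) * r = 0 := by
    rw [map_add, map_mul _ _ (-(2 * p) : ℚ_[p]), ← hr]
    simp only [map_add, map_sub, map_mul, map_pow, map_ofNat]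
    linear_combination he
  obtain ⟨h1, h2⟩ := coeffs_eq_zero_of_add_mul_eq_zero h hr hz
  obtain ⟨rfl, rfl⟩ := sq_add_sq_ne_two_mul_self_mul h (ε := 1) (u := a) (v := c) (w := b) (x := d)
    (by norm_num) (by linear_combination h1)
  obtain rfl : ε = 0 := by linear_combination -h2
  norm_num at hε

theorem Padic.neg_one_ne_sq (P : F) : P ^ 2 ≠ -1 := by
  intro hP
  have : CharZero F := charZero_of_injective_algebraMap (algebraMap ℚ_[p] F).injective
  apply sq_add_sq_ne_mul_uniformizer h hr hF (one_pow 2) ((r + 1) / 2) (P * ((r - 1) / 2))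
  rw [mul_pow, hP, map_one]
  ring

/-- A sum of two squares in a ramified extension `F = ℚ_p(√(-2p))` becomes a square over
every extension in which all elements of `ℚ_p` are squares. -/
theorem Padic.isSquare_algebraMap_sq_add_sq {E : Type*} [Field E] [Algebra ℚ_[p] E] [Algebra F E]
    [IsScalarTower ℚ_[p] F E] (hE : ∀ q : ℚ_[p], IsSquare (algebraMap ℚ_[p] E q)) (A B : F) :
    IsSquare (algebraMap F E (A ^ 2 + B ^ 2)) := by
  obtain ⟨a, b, rfl⟩ := exists_eq_add_mul_of_adjoin_eq_top hr hF A
  obtain ⟨c, d, rfl⟩ := exists_eq_add_mul_of_adjoin_eq_top hr hF B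
  obtain ⟨m, hm⟩ : ∃ m, m = a ^ 2 + c ^ 2 - 2 * p * (b ^ 2 + d ^ 2) := ⟨_, rfl⟩
  obtain ⟨n, hn⟩ : ∃ n, n = 2 * (a * b + c * d) := ⟨_, rfl⟩
  have hmn : (algebraMap ℚ_[p] F a + algebraMap ℚ_[p] F b * r) ^ 2 + (algebraMap ℚ_[p] F c + algebraMap ℚ_[p] F d * r) ^ 2 = algebraMap ℚ_[p] F m + algebraMap ℚ_[p] F n * r := by
    have : algebraMap ℚ_[p] F m = algebraMap ℚ_[p] F (a ^ 2 + c ^ 2) + algebraMap ℚ_[p] F (-(2 * p) : ℚ_[p]) * algebraMap ℚ_[p] F (b ^ 2 + d ^ 2) := by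
      rw [hm, ← map_mul, ← map_add]
      congr 1
      ring
    rw [this, ← hr, hn]
    simp only [map_add, map_mul, map_pow, map_ofNat]
    ring
  obtain ⟨e, he⟩ : ∃ e, m ^ 2 + 2 * p * n ^ 2 = e ^ 2 := by
    have hN : m ^ 2 + 2 * p * n ^ 2 =
        (a ^ 2 + 2 * p * b ^ 2 - (c ^ 2 + 2 * p * d ^ 2)) ^ 2 +
          (2 * (a * c + 2 * p * (b * d))) ^ 2 := by
      rw [hm, hn]
      ring
    rcases isSquare_or_isSquare_neg_of_even_valuation h
      (hN ▸ (even_valuation_sq_add_sq h _ _).2) with ⟨w, hw⟩ | ⟨w, hw⟩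
    · exact ⟨w, by rw [hw, sq]⟩
    · obtain ⟨rfl, -⟩ := sq_add_sq_ne_two_mul_self_mul h (ε := -1) (u := m) (v := w) (w := n)
        (x := 0) (by norm_num) (by linear_combination -hw)
      exact ⟨m, by ring⟩
  rw [hmn]
  by_cases hn0 : n = 0
  · simpa [hn0, ← IsScalarTower.algebraMap_apply] using hE m
  have : CharZero E := charZero_of_injective_algebraMap (algebraMap ℚ_[p] E).injective
  obtain ⟨x, hx⟩ := hE ((m + e) / 2)
  have hp0 : (p : ℚ_[p]) ≠ 0 := by exact_mod_cast hp.out.ne_zero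
  have hme : m + e ≠ 0 := by
    intro h0
    have : 2 * p * n ^ 2 = 0 := by linear_combination he + (e - m) * h0
    simp [hn0, hp0] at this
  have hx0 : x ≠ 0 := by
    rintro rfl
    rw [mul_zero, map_eq_zero] at hx
    simp [hme] at hx
  have hr' : (algebraMap F E r) ^ 2 = algebraMap ℚ_[p] E (-(2 * p)) := by
    rw [← map_pow, hr, ← IsScalarTower.algebraMap_apply]
  simp only [map_add, map_mul, ← IsScalarTower.algebraMap_apply ℚ_[p] F E]
  have he' := congrArg (algebraMap ℚ_[p] E) he
  simp only [map_add, map_mul, map_neg, map_pow, map_div₀, map_ofNat, map_natCast] at he' hx hr' ⊢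
  refine ⟨x + algebraMap ℚ_[p] E n * algebraMap F E r / (2 * x), ?_⟩
  generalize algebraMap ℚ_[p] E m = m at *
  generalize algebraMap ℚ_[p] E n = n at *
  generalize algebraMap ℚ_[p] E e = e at *
  generalize algebraMap F E r = r at *
  field_simp
  have hx2 : e = 2 * x ^ 2 - m := by linear_combination 2 * hx
  rw [hx2] at he'
  linear_combination he' - n ^ 2 * hr'

end RamifiedQuadratic

section GaussianExtension

variable {F E : Type*} [Field F] [Field E] [Algebra F E] {i : E}

local notation "ψ" => algebraMap F E

theorem linearIndependent_one_of_sq_eq_neg_one (hF : ∀ P : F, P ^ 2 ≠ -1) (hi : i ^ 2 = -1) :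
    LinearIndependent F ![1, i] := by
  rw [LinearIndependent.pair_iff]
  intro s t hst
  simp only [Algebra.smul_def, mul_one] at hst
  have ht : t = 0 := by
    by_contra ht
    apply hF (s / t)
    apply (algebraMap F E).injective
    have ht' : ψ t ≠ 0 := by simpa using ht
    rw [map_pow, map_div₀, map_neg, map_one]
    field_simp
    linear_combination (ψ s - ψ t * i) * hst + ψ t ^ 2 * hi
  simpa [ht] using hst

variable (hF : ∀ P : F, P ^ 2 ≠ -1) (hi : i ^ 2 = -1) (h2 : Module.finrank F E = 2)

include hF hi h2

theorem exists_basis_of_sq_eq_neg_one :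
    ∃ B : Module.Basis (Fin 2) F E, B 0 = 1 ∧ B 1 = i := by
  have hli := linearIndependent_one_of_sq_eq_neg_one hF hi
  have hcard : Fintype.card (Fin 2) = Module.finrank F E := by rw [h2, Fintype.card_fin]
  refine ⟨basisOfLinearIndependentOfCardEqFinrank (b := ![1, i]) hli hcard, ?_, ?_⟩
  · rw [coe_basisOfLinearIndependentOfCardEqFinrank]
    rfl
  · rw [coe_basisOfLinearIndependentOfCardEqFinrank]
    rfl

theorem exists_eq_add_mul_of_sq_eq_neg_one (x : E) : ∃ a b : F, x = ψ a + ψ b * i := by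
  obtain ⟨B, hB0, hB1⟩ := exists_basis_of_sq_eq_neg_one hF hi h2
  refine ⟨B.repr x 0, B.repr x 1, ?_⟩
  conv_lhs => rw [← B.sum_repr x]
  simp [hB0, hB1, Fin.sum_univ_two, Algebra.smul_def]

theorem Algebra.norm_add_mul_of_sq_eq_neg_one (a b : F) :
    Algebra.norm F (ψ a + ψ b * i) = a ^ 2 + b ^ 2 := by
  obtain ⟨B, hB0, hB1⟩ := exists_basis_of_sq_eq_neg_one hF hi h2
  have e0 : (ψ a + ψ b * i) * B 0 = a • B 0 + b • B 1 := by
    rw [hB0, hB1, Algebra.smul_def, Algebra.smul_def]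
    ring
  have e1 : (ψ a + ψ b * i) * B 1 = (-b) • B 0 + a • B 1 := by
    rw [hB0, hB1, Algebra.smul_def, Algebra.smul_def, map_neg]
    linear_combination ψ b * hi
  rw [Algebra.norm_eq_matrix_det B, Matrix.det_fin_two]
  simp only [Algebra.leftMulMatrix_eq_repr_mul, e0, e1, map_add, map_smul, B.repr_self,
    Finsupp.add_apply, Finsupp.smul_apply, Finsupp.single_apply]
  simp
  ring

/-- Projection formula for norms: if `(ξ, r)` is trivial over `E = F(i)`, then either `r` is up to
sign a sum of two squares in `F`, or `N(ξ)` is represented by `P² - r Q²`. -/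
theorem HilbertSymbolOne.norm_eq_sq_sub_mul_sq {ξ : E} {r : F}
    (hξ : HilbertSymbolOne E ξ (ψ r)) :
    (∃ A B : F, A ^ 2 + B ^ 2 = r ∨ A ^ 2 + B ^ 2 = -r) ∨
      ∃ P Q : F, Algebra.norm F ξ = P ^ 2 - r * Q ^ 2 := by
  obtain ⟨x, y, z, hne, he⟩ := hξ
  have hrep := exists_eq_add_mul_of_sq_eq_neg_one hF hi h2
  by_cases hx : x = 0
  · subst hx
    have hy : y ≠ 0 := by
      rintro rfl
      simp_all
    obtain ⟨A, B, hAB⟩ := hrep (z / y)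
    have hsq : (ψ A + ψ B * i) ^ 2 = ψ r := by
      rw [← hAB, div_pow, he]
      field_simp
      ring
    have hN := congrArg (Algebra.norm F) hsq
    rw [map_pow, Algebra.norm_add_mul_of_sq_eq_neg_one hF hi h2, Algebra.norm_algebraMap, h2] at hN
    exact Or.inl ⟨A, B, sq_eq_sq_iff_eq_or_eq_neg.mp hN⟩
  · obtain ⟨A, B, hz⟩ := hrep (z / x)
    obtain ⟨C, D, hy⟩ := hrep (y / x)
    have hξ : ξ = ψ (A ^ 2 - B ^ 2 - r * (C ^ 2 - D ^ 2)) +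
        ψ (2 * (A * B) - r * (2 * (C * D))) * i := by
      have h1 : ξ = (z / x) ^ 2 - ψ r * (y / x) ^ 2 := by
        field_simp
        linear_combination -he
      rw [h1, hz, hy]
      simp only [map_sub, map_mul, map_pow, map_ofNat]
      linear_combination (ψ B ^ 2 - ψ r * ψ D ^ 2) * hi
    refine Or.inr ⟨A ^ 2 + B ^ 2 + r * (C ^ 2 + D ^ 2), 2 * (A * C + B * D), ?_⟩
    rw [hξ, Algebra.norm_add_mul_of_sq_eq_neg_one hF hi h2]
    ring

/-- Elements of norm one are squares in `E = F(i)` once sums of two squares of `F` are. -/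
theorem isSquare_of_norm_eq_one (hE : ∀ A B : F, IsSquare (ψ (A ^ 2 + B ^ 2))) {ξ : E}
    (hξ : Algebra.norm F ξ = 1) : IsSquare ξ := by
  obtain ⟨a, b, rfl⟩ := exists_eq_add_mul_of_sq_eq_neg_one hF hi h2 ξ
  rw [Algebra.norm_add_mul_of_sq_eq_neg_one hF hi h2] at hξ
  by_cases hn : (1 + a) ^ 2 + b ^ 2 = 0
  · have ha : 2 * (1 + a) = 0 := by linear_combination hn - hξ
    have h2F : (2 : F) ≠ 0 := fun h0 => hF 1 (by linear_combination h0)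
    have ha1 : 1 + a = 0 := by simpa [h2F] using ha
    have hb : b = 0 := by simpa [ha1] using hn
    refine ⟨i, ?_⟩
    rw [eq_neg_of_add_eq_zero_right ha1, hb, ← sq, hi]
    simp
  · have hn' : ψ ((1 + a) ^ 2 + b ^ 2) ≠ 0 := (map_ne_zero _).mpr hn
    have he : ψ a + ψ b * i = (1 + ψ a + ψ b * i) ^ 2 / ψ ((1 + a) ^ 2 + b ^ 2) := by
      have hξ' := congrArg (algebraMap F E) hξ
      rw [eq_div_iff hn']
      simp only [map_add, map_pow, map_one] at hξ' ⊢
      linear_combination (1 + ψ a + ψ b * i) * hξ' - ψ b ^ 2 * hi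
    rw [he]
    exact (IsSquare.sq _).div (hE _ _)

end GaussianExtension

theorem HilbertSymbolOne.of_isSquare {K : Type*} [Field K] {a : K} (ha : IsSquare a) (b : K) :
    HilbertSymbolOne K a b := by
  obtain ⟨c, rfl⟩ := ha
  exact ⟨1, 0, c, by simp, by ring⟩

theorem HilbertSymbolOne.of_mul_isSquare {K : Type*} [Field K] {a b c : K} (hc0 : c ≠ 0)
    (hc : IsSquare c) (h : HilbertSymbolOne K a (b * c)) : HilbertSymbolOne K a b := by
  obtain ⟨d, rfl⟩ := hc
  obtain ⟨x, y, z, hne, he⟩ := h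
  have hd : d ≠ 0 := by simpa using hc0
  exact ⟨x, d * y, z, by simpa [hd] using hne, by rw [he]; ring⟩

/-- Let `l ≡ −1 (mod 8)` be prime, `F_𝔩 = ℚ_l(√(−2l))` and
`E_𝔏 = ℚ_l(i, √l)`, a quadratic extension of `F_𝔩`.  For `ξ ∈ E_𝔏^×`: if
`N_{E_𝔏/F_𝔩}(ξ) = 1` then `(ξ, √l)_𝔏 = (ξ, −√l)_𝔏 = 1`, and if
`N_{E_𝔏/F_𝔩}(ξ) = −1` then `(ξ, √l)_𝔏 = (ξ, −√l)_𝔏 = −1`. -/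
theorem hilbert_symbol_at_prime_above_l
    (l : ℕ) [Fact (Nat.Prime l)] (hl8 : l % 8 = 7)
    (Fl : Type*) [Field Fl] [Algebra ℚ_[l] Fl]
    (r : Fl) (hr : r ^ 2 = -((2 * l : ℕ) : Fl))
    (hFl : Algebra.adjoin ℚ_[l] {r} = ⊤)
    (E : Type*) [Field E] [Algebra ℚ_[l] E] [Algebra Fl E] [IsScalarTower ℚ_[l] Fl E]
    [FiniteDimensional Fl E] (hquad : Module.finrank Fl E = 2)
    (i sq : E) (hi : i ^ 2 = -1) (hsq : sq ^ 2 = (l : E))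
    (hE : Algebra.adjoin ℚ_[l] {i, sq} = ⊤)
    (ξ : E) (hξ : ξ ≠ 0) :
    (Algebra.norm Fl ξ = 1 →
      (HilbertSymbolOne E ξ sq ∧ HilbertSymbolOne E ξ (-sq))) ∧
    (Algebra.norm Fl ξ = -1 →
      (¬ HilbertSymbolOne E ξ sq ∧ ¬ HilbertSymbolOne E ξ (-sq))) := by
  have h4 : l % 4 = 3 := by omega
  have hr' : r ^ 2 = algebraMap ℚ_[l] Fl (-(2 * l)) := by
    rw [hr]
    simp [map_ofNat]
  have hF := Padic.neg_one_ne_sq h4 hr' hFl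
  have hsqE : ∀ q : ℚ_[l], IsSquare (algebraMap ℚ_[l] E q) :=
    Padic.isSquare_algebraMap h4 ⟨i, by rw [← pow_two, hi]⟩ ⟨sq, by rw [← hsq, pow_two]⟩
  have : CharZero E := charZero_of_injective_algebraMap (algebraMap ℚ_[l] E).injective
  refine ⟨fun hN => ?_, fun hN => ?_⟩
  · have hξs := isSquare_of_norm_eq_one hF hi hquad
      (Padic.isSquare_algebraMap_sq_add_sq h4 hr' hFl hsqE) hN
    exact ⟨.of_isSquare hξs _, .of_isSquare hξs _⟩
  have hno : ¬ HilbertSymbolOne E ξ (algebraMap Fl E r) := by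
    intro hs
    rcases hs.norm_eq_sq_sub_mul_sq hF hi hquad with ⟨A, B, hAB | hAB⟩ | ⟨P, Q, hPQ⟩
    · exact Padic.sq_add_sq_ne_mul_uniformizer h4 hr' hFl (ε := 1) (by norm_num) A B
        (by simpa using hAB)
    · exact Padic.sq_add_sq_ne_mul_uniformizer h4 hr' hFl (ε := -1) (by norm_num) A B
        (by simpa using hAB)
    · rw [hN] at hPQ
      by_cases hQ : Q = 0
      · exact hF P (by simpa [hQ] using hPQ.symm)
      · apply Padic.sq_add_sq_ne_mul_uniformizer h4 hr' hFl (ε := 1) (by norm_num) (P / Q) (1 / Q)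
        rw [map_one]
        field_simp
        linear_combination -hPQ
  obtain ⟨t, ht⟩ := Padic.isSquare_two hl8
  obtain ⟨τ, hτ⟩ : ∃ τ, τ = algebraMap ℚ_[l] E t := ⟨_, rfl⟩
  have hτ2 : τ ^ 2 = 2 := by
    rw [hτ, ← map_pow, pow_two, ← ht, map_ofNat]
  have hτ0 : τ ≠ 0 := by
    rintro rfl
    norm_num at hτ2
  have hi0 : i ≠ 0 := by
    rintro rfl
    norm_num at hi
  have hτi : IsSquare (τ * i) := by
    refine (hτ ▸ hsqE t).mul ⟨(1 + i) / τ, ?_⟩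
    field_simp
    linear_combination i * hτ2 - hi
  have hneg : IsSquare (-1 : E) := ⟨i, by rw [← hi, pow_two]⟩
  have hb : ∀ b : E, b ^ 2 = l → ¬ HilbertSymbolOne E ξ b := by
    intro b hb hs
    have hrb : algebraMap Fl E r ^ 2 = (b * (τ * i)) ^ 2 := by
      rw [← map_pow, hr, mul_pow, mul_pow, hb, hτ2, hi]
      simp [map_ofNat]
      ring
    rcases sq_eq_sq_iff_eq_or_eq_neg.mp hrb with h | h
    · refine hno (.of_mul_isSquare (c := (τ * i)⁻¹) (by positivity) hτi.inv ?_)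
      rwa [h, mul_inv_cancel_right₀ (by positivity)]
    · refine hno (.of_mul_isSquare (c := -1 * (τ * i)⁻¹) (by simp [hτ0, hi0])
        (hneg.mul hτi.inv) ?_)
      rwa [h, neg_one_mul, neg_mul_neg, mul_inv_cancel_right₀ (by positivity)]
  exact ⟨hb sq hsq, hb (-sq) (by rw [neg_sq, hsq])⟩
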